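/- Let u ∈ L¹[0,1] be not essentially bounded (u ∉ L^∞[0,1]). Then for every sequence (u_k) of piecewise constant functions on [0,1] converging to u in L¹[0,1], the number of jumps J(u_k) tends to infinity as k → ∞. -/

import Mathlib

open MeasureTheory Filter Set
open scoped ENNReal Classical

noncomputable section

/-- The Lebesgue measure restricted to `[0,1]`. -/
def mu01 : Measure ℝ := volume.restrict (Set.Icc (0:ℝ) 1)

/-- The step function determined by partition points `x` and values `a`. -/
def stepF {m : ℕ} (x : Fin (m + 1) → ℝ) (a : Fin m → ℝ) : ℝ → ℝ := fun t =>
  ∑ l : Fin m, Set.indicator (Set.Ioo (x l.castSucc) (x l.succ)) (fun _ => a l) t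

/-- `u` is a.e. on `[0,1]` represented by the step function with partition `x` and values `a`. -/
def IsPCRep (u : ℝ → ℝ) {m : ℕ} (x : Fin (m + 1) → ℝ) (a : Fin m → ℝ) : Prop :=
  StrictMono x ∧ x 0 = 0 ∧ x (Fin.last m) = 1 ∧ ∀ᵐ t ∂mu01, u t = stepF x a t

/-- `u` is piecewise constant on `[0,1]` (up to a.e. equality). -/
def IsPC (u : ℝ → ℝ) : Prop :=
  ∃ (m : ℕ) (x : Fin (m + 1) → ℝ) (a : Fin m → ℝ), IsPCRep u x a

/-- The number of jumps `J(u)`: the minimal number of interior partition points over all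
piecewise constant representations of `u`. -/
def jumps (u : ℝ → ℝ) : ℕ :=
  sInf {jj : ℕ | ∃ (x : Fin (jj + 2) → ℝ) (a : Fin (jj + 1) → ℝ), IsPCRep u x a}

/-- `u` is piecewise constant with all jump locations inside `S`. -/
def IsPCIn (u : ℝ → ℝ) (S : Set ℝ) : Prop :=
  ∃ (m : ℕ) (x : Fin (m + 1) → ℝ) (a : Fin m → ℝ), IsPCRep u x a ∧
    ∀ i : Fin (m + 1), i ≠ 0 → i ≠ Fin.last m → x i ∈ S

/-- The `L¹[0,1]` distance of two functions. -/
def L1dist (u v : ℝ → ℝ) : ℝ := ∫ t, |u t - v t| ∂mu01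

/-- The continuous `L¹`-Potts functional `P_γ` with data `f`. -/
def Potts (γ : ℝ) (f u : ℝ → ℝ) : ℝ≥0∞ :=
  if IsPC u then ENNReal.ofReal (γ * (jumps u : ℝ) + L1dist u f) else ⊤

/-- The (semi-)discrete `L¹`-Potts functional with data `f`, restricted to piecewise
constant functions whose jumps lie in `S`. -/
def PottsIn (γ : ℝ) (f : ℝ → ℝ) (S : Set ℝ) (u : ℝ → ℝ) : ℝ≥0∞ :=
  if IsPCIn u S then ENNReal.ofReal (γ * (jumps u : ℝ) + L1dist u f) else ⊤

instance : IsFiniteMeasure mu01 := by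
  unfold mu01
  infer_instance

theorem integrable_stepF {m : ℕ} (x : Fin (m + 1) → ℝ) (a : Fin m → ℝ) :
    Integrable (stepF x a) mu01 :=
  integrable_finsetSum _ fun _ _ => (integrable_const _).indicator measurableSet_Ioo

theorem stepF_mem_insert_zero_image {m : ℕ} {x : Fin (m + 1) → ℝ} (hx : StrictMono x)
    (a : Fin m → ℝ) (t : ℝ) : stepF x a t ∈ insert 0 (Finset.univ.image a) := by
  by_cases h : ∃ l : Fin m, t ∈ Ioo (x l.castSucc) (x l.succ)
  · obtain ⟨l, hl⟩ := h
    have hval : stepF x a t = a l := by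
      unfold stepF
      rw [Finset.sum_eq_single l, indicator_of_mem hl]
      · intro b _ hb
        refine indicator_of_notMem (fun hbt => ?_) _
        rcases lt_or_gt_of_ne hb with hlt | hlt
        · have := hx.monotone (show b.succ ≤ l.castSucc from hlt)
          linarith [hbt.2, hl.1]
        · have := hx.monotone (show l.succ ≤ b.castSucc from hlt)
          linarith [hl.2, hbt.1]
      · simp
    simp [hval]
  · have hval : stepF x a t = 0 :=
      Finset.sum_eq_zero fun l _ => indicator_of_notMem (fun hl => h ⟨l, hl⟩) _
    simp [hval]

/-- The minimum defining `jumps` is attained. -/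
theorem IsPC.exists_rep_jumps {u : ℝ → ℝ} (hu : IsPC u) :
    ∃ (x : Fin (jumps u + 2) → ℝ) (a : Fin (jumps u + 1) → ℝ), IsPCRep u x a := by
  refine Nat.sInf_mem
    (s := {jj : ℕ | ∃ (x : Fin (jj + 2) → ℝ) (a : Fin (jj + 1) → ℝ), IsPCRep u x a}) ?_
  obtain ⟨m, x, a, h⟩ := hu
  cases m with
  | zero =>
    have h01 : (0 : ℝ) = 1 := h.2.1.symm.trans h.2.2.1
    norm_num at h01
  | succ n => exact ⟨n, x, a, h⟩

/-- A function that is not essentially bounded charges infinitely many of the level sets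
`{t | ⌊|u t|⌋₊ = j}`. -/
theorem infinite_setOf_measure_floor_abs_ne_zero {α : Type*} [MeasurableSpace α] {μ : Measure α}
    {u : α → ℝ} (hunb : ¬ ∃ c : ℝ, ∀ᵐ t ∂μ, |u t| ≤ c) :
    {j : ℕ | μ {t | ⌊|u t|⌋₊ = j} ≠ 0}.Infinite := by
  intro hfin
  obtain ⟨C, hC⟩ := hfin.bddAbove
  refine hunb ⟨C + 1, ?_⟩
  have hnull : ∀ j : ℕ, ∀ᵐ t ∂μ, C < j → ⌊|u t|⌋₊ ≠ j := by
    intro j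
    by_cases hj : C < j
    · have h0 : μ {t | ⌊|u t|⌋₊ = j} = 0 := by
        by_contra h
        exact absurd (hC h) (not_le.2 hj)
      filter_upwards [measure_eq_zero_iff_ae_notMem.1 h0] with t ht _ using ht
    · exact Eventually.of_forall fun _ h => absurd h hj
  filter_upwards [ae_all_iff.2 hnull] with t ht
  have hle : ⌊|u t|⌋₊ ≤ C := not_lt.1 fun h => ht _ h rfl
  have hle' : ((⌊|u t|⌋₊ : ℕ) : ℝ) ≤ C := by exact_mod_cast hle
  linarith [Nat.lt_floor_add_one |u t|]

theorem floor_abs_mem_Icc_of_abs_sub_lt_one {y b : ℝ} (h : |y - b| < 1) :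
    ⌊|y|⌋₊ ∈ Finset.Icc (⌊|b|⌋₊ - 1) (⌊|b|⌋₊ + 1) := by
  have h1 := (abs_le.1 (abs_abs_sub_abs_le_abs_sub y b))
  have hy := Nat.floor_le (abs_nonneg y)
  have hy' := Nat.lt_floor_add_one |y|
  have hb := Nat.floor_le (abs_nonneg b)
  have hb' := Nat.lt_floor_add_one |b|
  have hlo : ⌊|b|⌋₊ < ⌊|y|⌋₊ + 2 := by
    have : ((⌊|b|⌋₊ : ℕ) : ℝ) < ⌊|y|⌋₊ + 2 := by linarith
    exact_mod_cast this
  have hhi : ⌊|y|⌋₊ < ⌊|b|⌋₊ + 2 := by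
    have : ((⌊|y|⌋₊ : ℕ) : ℝ) < ⌊|b|⌋₊ + 2 := by linarith
    exact_mod_cast this
  rw [Finset.mem_Icc]
  omega

/-- A function with values in a finite set `V` stays at distance at least `1` from `u` on one of
more than `3 * #V` given level sets `{t | ⌊|u t|⌋₊ = j}`. -/
theorem exists_floor_abs_forall_one_le_abs_sub (V : Finset ℝ) (T : Finset ℕ)
    (hT : V.card * 3 < T.card) :
    ∃ j ∈ T, ∀ y : ℝ, ⌊|y|⌋₊ = j → ∀ b ∈ V, 1 ≤ |b - y| := by
  have hcard : (V.biUnion fun b => Finset.Icc (⌊|b|⌋₊ - 1) (⌊|b|⌋₊ + 1)).card ≤ V.card * 3 := by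
    refine Finset.card_biUnion_le_card_mul _ _ _ fun b _ => ?_
    rw [Nat.card_Icc]
    omega
  obtain ⟨j, hjT, hj⟩ := Finset.exists_mem_notMem_of_card_lt_card (hcard.trans_lt hT)
  refine ⟨j, hjT, fun y hy b hb => not_lt.1 fun hlt => hj ?_⟩
  rw [abs_sub_comm] at hlt
  exact Finset.mem_biUnion.2 ⟨b, hb, hy ▸ floor_abs_mem_Icc_of_abs_sub_lt_one hlt⟩

theorem statement_7
    (u : ℝ → ℝ) (hu : IntegrableOn u (Set.Icc 0 1))
    -- `u` is not essentially bounded on `[0,1]`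
    (hunb : ¬ ∃ c : ℝ, ∀ᵐ t ∂mu01, |u t| ≤ c)
    (useq : ℕ → ℝ → ℝ) (huseq : ∀ k, IsPC (useq k))
    (hconv : Tendsto (fun k => L1dist (useq k) u) atTop (nhds 0)) :
    Tendsto (fun k => jumps (useq k)) atTop atTop := by
  refine tendsto_atTop.2 fun N => ?_
  obtain ⟨T, hTsub, hTcard⟩ :=
    (infinite_setOf_measure_floor_abs_ne_zero hunb).exists_subset_card_eq ((N + 1) * 3 + 1)
  have hTne : T.Nonempty := Finset.card_pos.1 (by omega)
  obtain ⟨i, hiT, hmin⟩ := T.exists_min_image (fun j => mu01.real {t | ⌊|u t|⌋₊ = j}) hTne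
  have hpos : 0 < mu01.real {t | ⌊|u t|⌋₊ = i} :=
    ENNReal.toReal_pos (hTsub hiT) (measure_ne_top _ _)
  filter_upwards [hconv.eventually_lt_const hpos] with k hk
  by_contra! hlt
  obtain ⟨x, a, hx, -, -, hrep⟩ := (huseq k).exists_rep_jumps
  have hV : (insert 0 (Finset.univ.image a)).card ≤ N + 1 := by
    have h1 := Finset.card_insert_le 0 (Finset.univ.image a)
    have h2 := Finset.card_image_le (s := Finset.univ) (f := a)
    rw [Finset.card_univ, Fintype.card_fin] at h2
    omega
  obtain ⟨j, hjT, hj⟩ := exists_floor_abs_forall_one_le_abs_sub _ T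
    (show (insert 0 (Finset.univ.image a)).card * 3 < T.card by omega)
  have hint : Integrable (fun t => |useq k t - u t|) mu01 :=
    (((integrable_stepF x a).congr (EventuallyEq.symm hrep)).sub hu).abs
  have hmarkov := mul_meas_ge_le_integral_of_nonneg
    (Eventually.of_forall fun t => abs_nonneg (useq k t - u t)) hint 1
  have hmono : mu01.real {t | ⌊|u t|⌋₊ = j} ≤ mu01.real {t | 1 ≤ |useq k t - u t|} := by
    refine ENNReal.toReal_mono (measure_ne_top _ _) (measure_mono_ae ?_)
    filter_upwards [hrep] with t ht hfloor
    change 1 ≤ |useq k t - u t|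
    rw [ht]
    exact hj _ hfloor _ (stepF_mem_insert_zero_image hx a t)
  have := hmin j hjT
  rw [one_mul] at hmarkov
  unfold L1dist at hk
  linarith
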